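/- Let D be an ADF and let v be an interpretation of D. If an argument a is strongly acceptable/deniable with respect to v and a least set S for a, then every s ∈ S satisfies v(s) ∈ {t, f} and is strongly acceptable (if v(s) = t) resp. strongly deniable (if v(s) = f) with respect to v and some set S' ⊆ S. -/

import Mathlib

/-! Shrinking the excluded set preserves strong justification (`SJrel.anti`), and a
justification over `S` only ever uses parents that are themselves strongly
justified over `S` (`SJrel.restrict_support`). So if `S` is a least set for `a`, then
the set of its strongly justified members still justifies `a`, and by minimality of
the cardinality that set is all of `S`. Hence `S' = S` works for every member of `S`. -/

/-- Three truth values: true, false, undecided. -/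
inductive TV : Type
  | t | f | u
deriving DecidableEq, Repr

/-- The information order on truth values: u <_i t and u <_i f. -/
def TV.ile (x y : TV) : Prop := x = TV.u ∨ x = y

/-- The information order on interpretations, extended pointwise. -/
def ILE {A : Type*} (v w : A → TV) : Prop := ∀ a, TV.ile (v a) (w a)

/-- An abstract dialectical framework on a set of arguments `A`:
each argument `a` has an acceptance condition `C a : (A → Bool) → Bool`. -/
structure ADF (A : Type*) where
  C : A → (A → Bool) → Bool

/-- The trivial interpretation mapping every argument to undecided. -/
def trivialInterp (A : Type*) : A → TV := fun _ => TV.u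

/-- The parents of `a` are the arguments on which its acceptance condition depends. -/
def ADF.parents {A : Type*} [DecidableEq A] (D : ADF A) (a : A) : Set A :=
  {b | ∃ w : A → Bool, D.C a w ≠ D.C a (Function.update w b (!w b))}

/-- A two-valued assignment `w` completes a three-valued interpretation `v`. -/
def Completes {A : Type*} (w : A → Bool) (v : A → TV) : Prop :=
  ∀ b, (v b = TV.t → w b = true) ∧ (v b = TV.f → w b = false)

/-- `φ` is irrefutable under `v`: every completion of `v` makes `φ` true. -/
def Irrefutable {A : Type*} (φ : (A → Bool) → Bool) (v : A → TV) : Prop :=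
  ∀ w : A → Bool, Completes w v → φ w = true

/-- `φ` is unsatisfiable under `v`: every completion of `v` makes `φ` false. -/
def Unsat {A : Type*} (φ : (A → Bool) → Bool) (v : A → TV) : Prop :=
  ∀ w : A → Bool, Completes w v → φ w = false

open Classical in
/-- The characteristic operator Γ_D of an ADF. -/
noncomputable def Gamma {A : Type*} (D : ADF A) (v : A → TV) : A → TV := fun a =>
  if Irrefutable (D.C a) v then TV.t
  else if Unsat (D.C a) v then TV.f
  else TV.u

open Classical in
/-- `v|_P`: agrees with `v` on `P` and is undecided elsewhere. -/
noncomputable def restrictTV {A : Type*} (v : A → TV) (P : Set A) : A → TV :=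
  fun b => if b ∈ P then v b else TV.u

/-- Strong acceptability/deniability of an argument with respect to interpretation `v`
and set `S`, relative to an excluded set `E` (the first index). An argument `a` with
`v a = t` (resp. `v a = f`) is strongly acceptable (resp. strongly deniable) iff there is
`P ⊆ (parents a ∩ S) \ E` with `φ_a^{v|_P}` irrefutable (resp. unsatisfiable) and every
`p ∈ P` strongly acceptable/deniable relative to `E ∪ {p}`. -/
inductive SJrel {A : Type*} [DecidableEq A] (D : ADF A) (v : A → TV) (S : Set A) :
    Set A → A → Prop
  | acc (E : Set A) (a : A) (P : Set A)
      (ha : v a = TV.t)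
      (hP : P ⊆ (D.parents a ∩ S) \ E)
      (hirr : Irrefutable (D.C a) (restrictTV v P))
      (hrec : ∀ p ∈ P, SJrel D v S (E ∪ {p}) p) : SJrel D v S E a
  | den (E : Set A) (a : A) (P : Set A)
      (ha : v a = TV.f)
      (hP : P ⊆ (D.parents a ∩ S) \ E)
      (hunsat : Unsat (D.C a) (restrictTV v P))
      (hrec : ∀ p ∈ P, SJrel D v S (E ∪ {p}) p) : SJrel D v S E a

/-- `a` is strongly acceptable/deniable w.r.t. `v` and `S`
(i.e., relative to the excluded set `{a}`). -/
def StronglyJustified {A : Type*} [DecidableEq A] (D : ADF A) (v : A → TV)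
    (S : Set A) (a : A) : Prop :=
  SJrel D v S {a} a

/-- `S` is a least set for `a` with respect to `v`. -/
def LeastSet {A : Type*} [DecidableEq A] (D : ADF A) (v : A → TV)
    (a : A) (S : Set A) : Prop :=
  StronglyJustified D v S a ∧
  ∀ S' : Set A, S'.ncard < S.ncard → ¬ StronglyJustified D v S' a

/-- An interpretation is strongly admissible iff every argument assigned `t`/`f`
is strongly acceptable/deniable w.r.t. `v` and some set `S`. -/
def StronglyAdmissible {A : Type*} [DecidableEq A] (D : ADF A) (v : A → TV) : Prop :=
  ∀ a : A, v a ≠ TV.u → ∃ S : Set A, StronglyJustified D v S a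

/-- `g` is the grounded interpretation of `D`: the least fixed point of `Γ_D`. -/
def IsGrounded {A : Type*} (D : ADF A) (g : A → TV) : Prop :=
  Gamma D g = g ∧ ∀ w : A → TV, Gamma D w = w → ILE g w

/-- An interpretation is admissible iff `v ≤_i Γ_D(v)`. -/
def Admissible {A : Type*} (D : ADF A) (v : A → TV) : Prop :=
  ILE v (Gamma D v)

/-- An interpretation is conflict-free. -/
def ConflictFree {A : Type*} (D : ADF A) (v : A → TV) : Prop :=
  ∀ a : A, (v a = TV.t → ∃ w : A → Bool, Completes w v ∧ D.C a w = true) ∧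
           (v a = TV.f → Unsat (D.C a) v)

/-- The join of two interpretations: take `v`'s value where defined, else `w`'s. -/
def joinI {A : Type*} (v w : A → TV) : A → TV :=
  fun a => if v a = TV.u then w a else v a

/-- Excluding fewer arguments only makes more parents available. -/
theorem SJrel.anti {A : Type*} [DecidableEq A] {D : ADF A} {v : A → TV} {S E : Set A}
    {a : A} (h : SJrel D v S E a) : ∀ {E' : Set A}, E' ⊆ E → SJrel D v S E' a := by
  induction h with
  | acc E a P ha hP hirr _ ih =>
    intro E' hE
    exact .acc E' a P ha (fun p hp => ⟨(hP hp).1, fun h => (hP hp).2 (hE h)⟩) hirr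
      (fun p hp => ih p hp (Set.union_subset_union_left _ hE))
  | den E a P ha hP hun _ ih =>
    intro E' hE
    exact .den E' a P ha (fun p hp => ⟨(hP hp).1, fun h => (hP hp).2 (hE h)⟩) hun
      (fun p hp => ih p hp (Set.union_subset_union_left _ hE))

/-- A justification over `S` uses only members of `S` that are strongly justified over `S`. -/
theorem SJrel.restrict_support {A : Type*} [DecidableEq A] {D : ADF A} {v : A → TV} {S E : Set A}
    {a : A} (h : SJrel D v S E a) : SJrel D v {s ∈ S | StronglyJustified D v S s} E a := by
  induction h with
  | acc E a P ha hP hirr hrec ih =>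
    exact .acc E a P ha (fun p hp => ⟨⟨(hP hp).1.1, (hP hp).1.2,
      (hrec p hp).anti Set.subset_union_right⟩, (hP hp).2⟩) hirr ih
  | den E a P ha hP hun hrec ih =>
    exact .den E a P ha (fun p hp => ⟨⟨(hP hp).1.1, (hP hp).1.2,
      (hrec p hp).anti Set.subset_union_right⟩, (hP hp).2⟩) hun ih

theorem SJrel.ne_u {A : Type*} [DecidableEq A] {D : ADF A} {v : A → TV} {S E : Set A}
    {a : A} (h : SJrel D v S E a) : v a ≠ TV.u := by
  cases h <;> simp_all

/-- If `a` is strongly acceptable/deniable w.r.t. `v` and a least set `S`,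
then every member of `S` has a defined truth value in `v` and is itself strongly
acceptable/deniable w.r.t. `v` and some subset of `S`. -/
theorem least_set_members_strongly_justified {A : Type*} [Fintype A] [DecidableEq A]
    (D : ADF A) (v : A → TV) (a : A) (S : Set A) (hleast : LeastSet D v a S) :
    ∀ s ∈ S, v s ≠ TV.u ∧ ∃ S' : Set A, S' ⊆ S ∧ StronglyJustified D v S' s := by
  intro s hs
  have hT : {s ∈ S | StronglyJustified D v S s} = S :=
    Set.eq_of_subset_of_ncard_le (Set.sep_subset _ _)
      (not_lt.mp fun hlt => hleast.2 _ hlt hleast.1.restrict_support) S.toFinite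
  have hs' : StronglyJustified D v S s := (hT.symm.subset hs).2
  exact ⟨hs'.ne_u, S, subset_rfl, hs'⟩
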